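/- Let π* be an optimal assignment for weights w and let Δ^k be the iterates of the recursive sensitivity algorithm. Then the pointwise limit Δ^∞ of the iterates Δ^k exists, is an allowable perturbation for (w, π*), and is critical; equivalently, s_{w+Δ^∞}(a,b) = 0 for every edge (a,b). -/

import Mathlib

open Finset Filter Topology

/-- Cost of an assignment `π : T → A` under weights `w : A × T → ℝ`. -/
noncomputable def cost {A T : Type*} [Fintype T] (w : A × T → ℝ) (π : T → A) : ℝ :=
  ∑ b : T, w (π b, b)

/-- `πs` is an optimal assignment for weights `w`: it is injective (an assignment)
and minimizes the cost among all assignments. -/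
def Optimal {A T : Type*} [Fintype T] (w : A × T → ℝ) (πs : T → A) : Prop :=
  Function.Injective πs ∧ ∀ π : T → A, Function.Injective π → cost w πs ≤ cost w π

/-- `δ` is an allowable perturbation for `(w, πs)`: `πs` remains optimal for `w + δ`. -/
def Allowable {A T : Type*} [Fintype T] (w δ : A × T → ℝ) (πs : T → A) : Prop :=
  Optimal (w + δ) πs

-- The element-wise sensitivity of edge `(a, b)` for weights `w` and assignment `πs`.
open Classical in
noncomputable def sens {A T : Type*} [Fintype T] (w : A × T → ℝ) (πs : T → A)
    (a : A) (b : T) : ℝ :=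
  if πs b = a then
    sInf {c | ∃ π : T → A, Function.Injective π ∧ π b ≠ a ∧ cost w π = c} - cost w πs
  else
    cost w πs - sInf {c | ∃ π : T → A, Function.Injective π ∧ π b = a ∧ cost w π = c}

-- An allowable perturbation `δ` for `(w, πs)` is critical if increasing it by any `ε > 0`
-- on an assigned edge (resp. decreasing by `ε` on an unassigned edge) destroys allowability.
open Classical in
def Critical {A T : Type*} [Fintype T] (w δ : A × T → ℝ) (πs : T → A) : Prop :=
  ∀ (i : A) (j : T), ∀ ε > (0 : ℝ),
    ¬ Allowable w
      (fun e => if e = (i, j) then (if πs j = i then δ e + ε else δ e - ε) else δ e) πs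

/-- Iterates of the recursive sensitivity algorithm: `Δ⁰ = 0` and
`Δ^{k+1}(a,b) = Δ^k(a,b) + s_{w+Δ^k}(a,b)/(2N)` with `N = |T|`. -/
noncomputable def iter {A T : Type*} [Fintype T] (w : A × T → ℝ) (πs : T → A) :
    ℕ → (A × T → ℝ)
  | 0 => 0
  | k + 1 => fun e =>
      iter w πs k e + sens (w + iter w πs k) πs e.1 e.2 / (2 * (Fintype.card T : ℝ))

/-- The cost of `π` relative to the reference assignment `πs`. -/
noncomputable def gap {A T : Type*} [Fintype T] (w : A × T → ℝ) (πs π : T → A) : ℝ :=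
  cost w π - cost w πs

open Classical in
/-- The direction in which an edge may be perturbed in favour of the other assignments:
`1` on edges of `πs` and `-1` elsewhere. -/
noncomputable def edgeSign {A T : Type*} (πs : T → A) (e : A × T) : ℝ :=
  if πs e.2 = e.1 then 1 else -1

/-- `π` is an assignment that disagrees with `πs` on whether the edge `e` is assigned. -/
def Flips {A T : Type*} (πs : T → A) (e : A × T) (π : T → A) : Prop :=
  Function.Injective π ∧ (π e.2 = e.1 ↔ πs e.2 ≠ e.1)

section Sensitivity

variable {A T : Type*} {πs π : T → A}

theorem edgeSign_mul_self (πs : T → A) (e : A × T) : edgeSign πs e * edgeSign πs e = 1 := by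
  unfold edgeSign; split_ifs <;> norm_num

theorem exists_flips [Nontrivial T] (hinj : Function.Injective πs) (e : A × T) :
    ∃ π, Flips πs e π := by
  classical
  obtain ⟨a, b⟩ := e
  by_cases h : πs b = a
  · obtain ⟨c, hc⟩ := exists_ne b
    refine ⟨πs ∘ Equiv.swap b c, hinj.comp (Equiv.injective _), ?_⟩
    have : πs c ≠ a := fun h' => hc (hinj (h'.trans h.symm))
    simp [h, this]
  · refine ⟨Equiv.swap (πs b) a ∘ πs, (Equiv.injective _).comp hinj, ?_⟩
    simp [h]

variable [Fintype T]

theorem Optimal.gap_nonneg {w : A × T → ℝ} (h : Optimal w πs) (hπ : Function.Injective π) :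
    0 ≤ gap w πs π :=
  sub_nonneg.2 (h.2 π hπ)

theorem cost_add (w δ : A × T → ℝ) (π : T → A) : cost (w + δ) π = cost w π + cost δ π := by
  simp [cost, sum_add_distrib]

open Classical in
/-- A perturbation changes the gap of `π` only through the edges on which `π` and `πs` differ. -/
theorem gap_add (w δ : A × T → ℝ) (πs π : T → A) :
    gap (w + δ) πs π = gap w πs π - ∑ b, if π b = πs b then 0 else
      edgeSign πs (π b, b) * δ (π b, b) + edgeSign πs (πs b, b) * δ (πs b, b) := by
  have key : cost δ πs - cost δ π = ∑ b, if π b = πs b then 0 else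
      edgeSign πs (π b, b) * δ (π b, b) + edgeSign πs (πs b, b) * δ (πs b, b) := by
    rw [cost, cost, ← sum_sub_distrib]
    refine sum_congr rfl fun b _ => ?_
    split_ifs with h
    · rw [h, sub_self]
    · simp only [edgeSign, if_true, if_neg (Ne.symm h)]
      ring
  rw [← key, gap, gap, cost_add, cost_add]
  ring

/-- A favourable perturbation decreases the gap of an assignment that flips `e` by at least the
size of the perturbation on `e`. -/
theorem Flips.gap_add_le {w δ : A × T → ℝ} {e : A × T} (hδ : ∀ e, 0 ≤ edgeSign πs e * δ e)
    (hπ : Flips πs e π) : gap (w + δ) πs π + edgeSign πs e * δ e ≤ gap w πs π := by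
  classical
  obtain ⟨a, b⟩ := e
  have hne : π b ≠ πs b := fun h => by
    have := hπ.2
    simp only [h] at this
    tauto
  have hsingle := single_le_sum (s := univ) (f := fun b => if π b = πs b then (0 : ℝ) else
      edgeSign πs (π b, b) * δ (π b, b) + edgeSign πs (πs b, b) * δ (πs b, b))
    (fun c _ => by
      split_ifs
      · exact le_rfl
      · exact add_nonneg (hδ _) (hδ _)) (mem_univ b)
  simp only [if_neg hne] at hsingle
  have hterm : edgeSign πs (a, b) * δ (a, b) ≤
      edgeSign πs (π b, b) * δ (π b, b) + edgeSign πs (πs b, b) * δ (πs b, b) := by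
    by_cases h : πs b = a
    · subst h
      linarith [hδ (π b, b)]
    · have h' : π b = a := hπ.2.2 h
      subst h'
      linarith [hδ (πs b, b)]
  rw [gap_add]
  linarith

/-- The absolute value of the sensitivity of `e` is the least gap of an assignment flipping `e`. -/
theorem exists_flips_sens_eq [Finite A] [Nontrivial T] (hinj : Function.Injective πs)
    (w : A × T → ℝ) (e : A × T) :
    ∃ π, Flips πs e π ∧ edgeSign πs e * sens w πs e.1 e.2 = gap w πs π ∧
      ∀ π', Flips πs e π' → gap w πs π ≤ gap w πs π' := by
  obtain ⟨π, hπ, hmin⟩ := Set.exists_min_image {π | Flips πs e π} (cost w) (Set.toFinite _)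
    (exists_flips hinj e)
  refine ⟨π, hπ, ?_, fun π' hπ' => sub_le_sub_right (hmin π' hπ') _⟩
  by_cases h : πs e.2 = e.1
  · have hleast : IsLeast {c | ∃ π : T → A, Function.Injective π ∧ π e.2 ≠ e.1 ∧ cost w π = c}
        (cost w π) := by
      refine ⟨⟨π, hπ.1, fun h' => hπ.2.1 h' h, rfl⟩, ?_⟩
      rintro c ⟨π', hi, hne, rfl⟩
      exact hmin π' ⟨hi, by tauto⟩
    rw [edgeSign, if_pos h, sens, if_pos h, hleast.csInf_eq, gap, one_mul]
  · have hleast : IsLeast {c | ∃ π : T → A, Function.Injective π ∧ π e.2 = e.1 ∧ cost w π = c}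
        (cost w π) := by
      refine ⟨⟨π, hπ.1, hπ.2.2 h, rfl⟩, ?_⟩
      rintro c ⟨π', hi, heq, rfl⟩
      exact hmin π' ⟨hi, by tauto⟩
    rw [edgeSign, if_neg h, sens, if_neg h, hleast.csInf_eq, gap]
    ring

theorem Optimal.edgeSign_mul_sens_nonneg [Finite A] [Nontrivial T] {w : A × T → ℝ}
    (h : Optimal w πs) (e : A × T) : 0 ≤ edgeSign πs e * sens w πs e.1 e.2 := by
  obtain ⟨π, hπ, heq, -⟩ := exists_flips_sens_eq h.1 w e
  exact heq ▸ h.gap_nonneg hπ.1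

theorem Flips.edgeSign_mul_sens_le [Finite A] [Nontrivial T] {e : A × T} (hπ : Flips πs e π)
    (hinj : Function.Injective πs) (w : A × T → ℝ) :
    edgeSign πs e * sens w πs e.1 e.2 ≤ gap w πs π := by
  obtain ⟨π', -, heq, hmin⟩ := exists_flips_sens_eq hinj w e
  exact heq ▸ hmin π hπ

/-- One step of the recursive sensitivity algorithm preserves optimality. -/
theorem Optimal.add_sens [Finite A] [Nontrivial T] {w : A × T → ℝ} (h : Optimal w πs) :
    Optimal (w + fun e => sens w πs e.1 e.2 / (2 * (Fintype.card T : ℝ))) πs := by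
  classical
  refine ⟨h.1, fun π hπ => sub_nonneg.1 ?_⟩
  change 0 ≤ gap _ πs π
  have hN : (0 : ℝ) < Fintype.card T := Nat.cast_pos.2 Fintype.card_pos
  have hle (e) (he : Flips πs e π) :
      edgeSign πs e * (sens w πs e.1 e.2 / (2 * (Fintype.card T : ℝ))) ≤
        gap w πs π / (2 * Fintype.card T) := by
    rw [← mul_div_assoc]
    exact div_le_div_of_nonneg_right (he.edgeSign_mul_sens_le h.1 w) (by positivity)
  rw [gap_add, sub_nonneg]
  calc _ ≤ ∑ _b : T, gap w πs π / Fintype.card T := by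
        refine sum_le_sum fun b _ => ?_
        split_ifs with hb
        · exact div_nonneg (h.gap_nonneg hπ) hN.le
        · have h₁ := hle (π b, b) ⟨hπ, by simp [Ne.symm hb]⟩
          have h₂ := hle (πs b, b) ⟨hπ, by simp [hb]⟩
          have h₃ : gap w πs π / (2 * Fintype.card T) + gap w πs π / (2 * Fintype.card T) =
              gap w πs π / Fintype.card T := by
            field_simp
            norm_num
          dsimp only at h₁ h₂ ⊢
          linarith
    _ = gap w πs π := by
        rw [sum_const, card_univ, nsmul_eq_mul]
        field_simp

theorem allowable_iter [Finite A] [Nontrivial T] {w : A × T → ℝ} (h : Optimal w πs) (k : ℕ) :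
    Allowable w (iter w πs k) πs := by
  induction k with
  | zero => simpa [Allowable, iter] using h
  | succ k ih =>
    have := Optimal.add_sens ih
    rwa [add_assoc] at this

theorem monotone_edgeSign_mul_iter [Finite A] [Nontrivial T] {w : A × T → ℝ}
    (h : Optimal w πs) (e : A × T) : Monotone fun k => edgeSign πs e * iter w πs k e := by
  refine monotone_nat_of_le_succ fun k => ?_
  have := div_nonneg ((allowable_iter h k).edgeSign_mul_sens_nonneg e)
    (by positivity : (0 : ℝ) ≤ 2 * Fintype.card T)
  rw [iter, mul_add, ← mul_div_assoc]
  exact le_add_of_nonneg_right this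

theorem exists_tendsto_edgeSign_mul_iter [Finite A] [Nontrivial T] {w : A × T → ℝ}
    (h : Optimal w πs) (e : A × T) :
    ∃ l, Tendsto (fun k => edgeSign πs e * iter w πs k e) atTop (𝓝 l) := by
  obtain ⟨π, hπ⟩ := exists_flips h.1 e
  refine ⟨_, tendsto_atTop_ciSup (monotone_edgeSign_mul_iter h e) ⟨gap w πs π, ?_⟩⟩
  rintro _ ⟨k, rfl⟩
  have hnonneg (e) : 0 ≤ edgeSign πs e * iter w πs k e := by
    simpa [iter] using monotone_edgeSign_mul_iter h e k.zero_le
  have := hπ.gap_add_le (w := w) hnonneg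
  have := Optimal.gap_nonneg (allowable_iter h k) hπ.1
  dsimp only
  linarith

theorem allowable_of_tendsto {w δ : A × T → ℝ} {d : ℕ → A × T → ℝ}
    (hd : ∀ k, Allowable w (d k) πs) (hlim : ∀ e, Tendsto (fun k => d k e) atTop (𝓝 (δ e))) :
    Allowable w δ πs := by
  have hcost (π : T → A) : Tendsto (fun k => cost (w + d k) π) atTop (𝓝 (cost (w + δ) π)) :=
    tendsto_finsetSum _ fun b _ => (hlim (π b, b)).const_add _
  exact ⟨(hd 0).1, fun π hπ => le_of_tendsto_of_tendsto' (hcost πs) (hcost π)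
    fun k => (hd k).2 π hπ⟩

theorem sens_eq_zero_of_tendsto_iter [Finite A] [Nontrivial T] {w δ : A × T → ℝ}
    (h : Optimal w πs) (hlim : ∀ e, Tendsto (fun k => iter w πs k e) atTop (𝓝 (δ e)))
    (e : A × T) : sens (w + δ) πs e.1 e.2 = 0 := by
  have hδ : Allowable w δ πs := allowable_of_tendsto (allowable_iter h) hlim
  have hbound (k : ℕ) : edgeSign πs e * sens (w + δ) πs e.1 e.2 ≤
      edgeSign πs e * (2 * Fintype.card T * (iter w πs (k + 1) e - iter w πs k e)) := by
    obtain ⟨π, hπ, heq, -⟩ := exists_flips_sens_eq h.1 (w + iter w πs k) e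
    have hdiff (e) : 0 ≤ edgeSign πs e * (δ - iter w πs k) e := by
      rw [Pi.sub_apply, mul_sub, sub_nonneg]
      exact (monotone_edgeSign_mul_iter h e).ge_of_tendsto ((hlim e).const_mul _) k
    have hgap := hπ.gap_add_le (w := w + iter w πs k) hdiff
    rw [add_assoc, add_sub_cancel] at hgap
    have hstep : 2 * Fintype.card T * (iter w πs (k + 1) e - iter w πs k e) =
        sens (w + iter w πs k) πs e.1 e.2 := by
      have hN : (Fintype.card T : ℝ) ≠ 0 := Nat.cast_ne_zero.2 Fintype.card_ne_zero
      rw [iter]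
      field_simp
      ring
    rw [hstep, heq]
    linarith [hπ.edgeSign_mul_sens_le h.1 (w + δ), hdiff e]
  have hzero : Tendsto (fun k => edgeSign πs e *
      (2 * Fintype.card T * (iter w πs (k + 1) e - iter w πs k e))) atTop (𝓝 0) := by
    simpa using ((((hlim e).comp (tendsto_add_atTop_nat 1)).sub (hlim e)).const_mul
      (2 * (Fintype.card T : ℝ))).const_mul (edgeSign πs e)
  have hprod := le_antisymm (ge_of_tendsto' hzero hbound) (Optimal.edgeSign_mul_sens_nonneg hδ e)
  refine (mul_eq_zero.1 hprod).resolve_left fun h0 => ?_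
  simpa [h0] using edgeSign_mul_self πs e

theorem critical_of_sens_eq_zero [Finite A] [Nontrivial T] {w δ : A × T → ℝ}
    (hinj : Function.Injective πs) (hsens : ∀ a b, sens (w + δ) πs a b = 0) :
    Critical w δ πs := by
  classical
  intro i j ε hε hall
  obtain ⟨π, hπ, heq, -⟩ := exists_flips_sens_eq hinj (w + δ) (i, j)
  rw [hsens, mul_zero] at heq
  let η : A × T → ℝ := fun e => if e = (i, j) then edgeSign πs e * ε else 0
  have hη (e) : edgeSign πs e * η e = if e = (i, j) then ε else 0 := by
    simp only [η, mul_ite, mul_zero, ← mul_assoc, edgeSign_mul_self, one_mul]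
  have hopt : Optimal (w + δ + η) πs := by
    rw [Allowable] at hall
    convert hall using 1
    rw [add_assoc]
    congr 1
    funext e
    by_cases he : e = (i, j)
    · subst he
      simp only [η, edgeSign, Pi.add_apply, if_true]
      split_ifs <;> ring
    · simp [η, he]
  have hle := hπ.gap_add_le (w := w + δ) (δ := η) fun e => by
    rw [hη]; split_ifs <;> linarith
  rw [hη, if_pos rfl] at hle
  linarith [hopt.gap_nonneg hπ.1]

end Sensitivity

theorem stmt17 {A T : Type*} [Fintype A] [Fintype T] [Nonempty A] [Nonempty T]
    (hT : 2 ≤ Fintype.card T) (hAT : Fintype.card T ≤ Fintype.card A)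
    (w : A × T → ℝ) (πs : T → A)
    (hopt : Optimal w πs) :
    ∃ Δinf : A × T → ℝ,
      (∀ a b, Tendsto (fun k => iter w πs k (a, b)) atTop (𝓝 (Δinf (a, b)))) ∧
      Allowable w Δinf πs ∧
      Critical w Δinf πs ∧
      (∀ a b, sens (w + Δinf) πs a b = 0) := by
  have : Nontrivial T := Fintype.one_lt_card_iff_nontrivial.1 hT
  choose l hl using exists_tendsto_edgeSign_mul_iter hopt
  have hlim (e : A × T) :
      Tendsto (fun k => iter w πs k e) atTop (𝓝 (edgeSign πs e * l e)) := by
    simpa only [← mul_assoc, edgeSign_mul_self, one_mul] using (hl e).const_mul (edgeSign πs e)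
  have hsens (a : A) (b : T) : sens (w + fun e => edgeSign πs e * l e) πs a b = 0 :=
    sens_eq_zero_of_tendsto_iter hopt hlim (a, b)
  exact ⟨fun e => edgeSign πs e * l e, fun a b => hlim (a, b),
    allowable_of_tendsto (allowable_iter hopt) hlim, critical_of_sens_eq_zero hopt.1 hsens, hsens⟩
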